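/- Let G be a reduced well-indumatched unicyclic graph of girth g ≥ 10, not isomorphic to the cycle C_11, with unique cycle C = v1 v2 ... vg v1, such that for every i the rooted tree T_{v_i} is of Type (i) or of Type (ii). Then for every i (indices modulo g), exactly one of T_{v_i} and T_{v_{i+1}} is of Type (i) and the other is of Type (ii); in particular g is even and every maximal induced matching of G has size g/2. -/

import Mathlib

open SimpleGraph

/-- `M` is an induced matching of `G`: a set of edges of `G` such that no two distinct
edges of `M` share an endpoint or have endpoints joined by an edge of `G`. -/
def IsInducedMatching {V : Type*} (G : SimpleGraph V) (M : Set (Sym2 V)) : Prop :=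
  M ⊆ G.edgeSet ∧
    ∀ e ∈ M, ∀ f ∈ M, e ≠ f → ∀ u ∈ e, ∀ v ∈ f, u ≠ v ∧ ¬ G.Adj u v

/-- `M` is a maximal induced matching of `G`. -/
def IsMaximalInducedMatching {V : Type*} (G : SimpleGraph V) (M : Set (Sym2 V)) : Prop :=
  IsInducedMatching G M ∧
    ∀ N : Set (Sym2 V), IsInducedMatching G N → M ⊆ N → N = M

/-- `G` is well-indumatched: all of its maximal induced matchings have the same size. -/
def WellIndumatched {V : Type*} (G : SimpleGraph V) : Prop :=
  ∀ M N : Set (Sym2 V), IsMaximalInducedMatching G M → IsMaximalInducedMatching G N →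
    M.ncard = N.ncard

/-- A graph is reduced if no two distinct vertices have the same open neighborhood. -/
def Reduced {V : Type*} (G : SimpleGraph V) : Prop :=
  ∀ x y : V, G.neighborSet x = G.neighborSet y → x = y

/-- The component of `v` in `H` is of Type (i): it consists of the single vertex `v`. -/
def TypeI {V : Type*} (H : SimpleGraph V) (v : V) : Prop :=
  (H.connectedComponentMk v).supp = {v}

/-- The component of `v` in `H` is of Type (ii): it is a path of length `2` having `v`
as an endpoint. -/
def TypeII {V : Type*} (H : SimpleGraph V) (v : V) : Prop :=
  ∃ x y : V, x ≠ y ∧ v ≠ x ∧ v ≠ y ∧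
    (H.connectedComponentMk v).supp = {v, x, y} ∧
    H.Adj v x ∧ H.Adj x y ∧ ¬ H.Adj v y

/-!
In a well-indumatched graph, replacing one edge of an induced matching by two must block some edge
that was free before: otherwise any maximal completion of the first matching would yield a larger
maximal induced matching.

The graph is a cycle with paths of length 2 attached at a set `S` of its vertices. If `i` and
`i + 1` both lay in `S`, the cycle edge between them could be replaced by the two end edges of
their tails. If `i ∈ S` and `i + 2 ∉ S`, then in the presence of the cycle edge
`{i + 4, i + 5}` one may replace `{i, i + 1}` by the end edge of the tail at `i` and
`{i + 1, i + 2}`. If `S` is empty, replacing `{i + 5, i + 6}` by `{i + 3, i + 4}` and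
`{i + 6, i + 7}`, after fixing `{i, i + 1}` and possibly `{i + 9, i + 10}`, leaves only the
length 11 among those `≥ 9`. Hence `S` consists of every other vertex of the cycle, and the end
edges of the tails form a maximal induced matching of size `g / 2`.
-/

section InducedMatching

variable {V V' : Type*} {G : SimpleGraph V} {M N : Set (Sym2 V)} {a b w : V}

/-- The vertices dominated by a set `M` of edges: those equal or adjacent to an endpoint of an
edge of `M`. An edge can be added to an induced matching exactly when neither of its endpoints
is dominated. -/
def dominatedSet (G : SimpleGraph V) (M : Set (Sym2 V)) : Set V :=
  {w | ∃ e ∈ M, ∃ u ∈ e, u = w ∨ G.Adj u w}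

@[simp]
lemma notMem_dominatedSet_empty : w ∉ dominatedSet G ∅ := by
  simp [dominatedSet]

@[simp]
lemma mem_dominatedSet_insert : w ∈ dominatedSet G (insert s(a, b) M) ↔
    (a = w ∨ G.Adj a w) ∨ (b = w ∨ G.Adj b w) ∨ w ∈ dominatedSet G M := by
  simp [dominatedSet, or_assoc]

@[simp]
lemma mem_dominatedSet_singleton :
    w ∈ dominatedSet G {s(a, b)} ↔ (a = w ∨ G.Adj a w) ∨ b = w ∨ G.Adj b w := by
  simp [dominatedSet]

lemma mem_dominatedSet_of_mem {e : Sym2 V} (he : e ∈ M) (hw : w ∈ e) : w ∈ dominatedSet G M :=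
  ⟨e, he, w, hw, .inl rfl⟩

lemma mem_dominatedSet_insert_of_mem (hw : w ∈ dominatedSet G M) :
    w ∈ dominatedSet G (insert s(a, b) M) :=
  mem_dominatedSet_insert.2 (.inr (.inr hw))

lemma IsInducedMatching.mono (hN : IsInducedMatching G N) (h : M ⊆ N) : IsInducedMatching G M :=
  ⟨h.trans hN.1, fun e he f hf ↦ hN.2 e (h he) f (h hf)⟩

lemma IsInducedMatching.notMem_dominatedSet (hN : IsInducedMatching G N) (hMN : M ⊆ N)
    {f : Sym2 V} (hf : f ∈ N) (hfM : f ∉ M) (hw : w ∈ f) : w ∉ dominatedSet G M := by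
  rintro ⟨e, he, u, hu, huw⟩
  exact not_or.2 (hN.2 e (hMN he) f hf (fun h ↦ hfM (h ▸ he)) u hu w hw) huw

lemma isInducedMatching_empty : IsInducedMatching G ∅ :=
  ⟨Set.empty_subset _, by simp⟩

lemma IsInducedMatching.union (hM : IsInducedMatching G M) (hN : IsInducedMatching G N)
    (h : ∀ e ∈ N, ∀ w ∈ e, w ∉ dominatedSet G M) : IsInducedMatching G (M ∪ N) := by
  have hcross : ∀ e ∈ M, ∀ f ∈ N, ∀ u ∈ e, ∀ v ∈ f, u ≠ v ∧ ¬ G.Adj u v :=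
    fun e he f hf u hu v hv ↦ not_or.1 fun huv ↦ h f hf v hv ⟨e, he, u, hu, huv⟩
  refine ⟨Set.union_subset hM.1 hN.1, ?_⟩
  rintro e (he | he) f (hf | hf) hef u hu v hv
  · exact hM.2 e he f hf hef u hu v hv
  · exact hcross e he f hf u hu v hv
  · exact (hcross f hf e he v hv u hu).imp Ne.symm fun h huv ↦ h huv.symm
  · exact hN.2 e he f hf hef u hu v hv

lemma isInducedMatching_singleton (hab : G.Adj a b) : IsInducedMatching G {s(a, b)} :=
  ⟨by simpa using hab, by rintro e rfl f rfl hef; exact absurd rfl hef⟩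

lemma IsInducedMatching.insert (hM : IsInducedMatching G M) (hab : G.Adj a b)
    (ha : a ∉ dominatedSet G M) (hb : b ∉ dominatedSet G M) :
    IsInducedMatching G (insert s(a, b) M) := by
  rw [Set.insert_eq, Set.union_comm]
  exact hM.union (isInducedMatching_singleton hab) (by simp [ha, hb])

lemma ncard_insert_of_notMem_dominatedSet [Finite V] (ha : a ∉ dominatedSet G M) :
    (insert s(a, b) M).ncard = M.ncard + 1 :=
  Set.ncard_insert_of_notMem fun h ↦ ha (mem_dominatedSet_of_mem h (Sym2.mem_mk_left a b))

lemma IsInducedMatching.isMaximalInducedMatching (hM : IsInducedMatching G M)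
    (hdom : ∀ ⦃u w⦄, G.Adj u w → u ∈ dominatedSet G M ∨ w ∈ dominatedSet G M) :
    IsMaximalInducedMatching G M := by
  refine ⟨hM, fun N hN hMN ↦ (hMN.antisymm fun f hf ↦ ?_).symm⟩
  by_contra hfM
  obtain ⟨w, hw, hwM⟩ : ∃ w ∈ f, w ∈ dominatedSet G M := by
    induction f with | h x y => simpa using hdom (hN.1 hf)
  exact hN.notMem_dominatedSet hMN hf hfM hw hwM

lemma IsInducedMatching.exists_isMaximalInducedMatching [Finite V] (hM : IsInducedMatching G M) :
    ∃ N, M ⊆ N ∧ IsMaximalInducedMatching G N := by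
  obtain ⟨N, hMN, hN⟩ := Set.Finite.exists_le_maximal
    (Set.toFinite {N : Set (Sym2 V) | IsInducedMatching G N}) hM
  exact ⟨N, hMN, hN.1, fun K hK hNK ↦ (hN.2 hK hNK).antisymm hNK⟩

/- Complete `M` to a maximal induced matching and swap `M` for `N` inside it: the hypothesis says
that none of the added edges is in conflict with `N`. -/
lemma WellIndumatched.ncard_le_of_dominated [Finite V] (hG : WellIndumatched G)
    (hM : IsInducedMatching G M) (hN : IsInducedMatching G N)
    (hdom : ∀ u ∈ dominatedSet G N, u ∉ dominatedSet G M → ∀ w, G.Adj u w →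
      w ∈ dominatedSet G M) :
    N.ncard ≤ M.ncard := by
  obtain ⟨I, hMI, hI⟩ := hM.exists_isMaximalInducedMatching
  have hfree : ∀ f ∈ I \ M, ∀ w ∈ f, w ∉ dominatedSet G N := by
    rintro f ⟨hfI, hfM⟩ w hw hwN
    have hundom {u : V} (hu : u ∈ f) := hI.1.notMem_dominatedSet hMI hfI hfM hu
    obtain ⟨u, rfl⟩ := hw
    exact hundom (Sym2.mem_mk_right w u)
      (hdom w hwN (hundom (Sym2.mem_mk_left w u)) u (hI.1.1 hfI))
  obtain ⟨J, hJ, hJmax⟩ :=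
    (hN.union (hI.1.mono Set.sdiff_subset) hfree).exists_isMaximalInducedMatching
  have hdisj : Disjoint N (I \ M) := by
    refine Set.disjoint_left.2 fun e heN heI ↦ ?_
    induction e with
    | h x y =>
      exact hfree _ heI x (Sym2.mem_mk_left x y)
        (mem_dominatedSet_of_mem heN (Sym2.mem_mk_left x y))
  have hIJ := hG I J hI hJmax
  have hle := Set.ncard_le_ncard hJ
  rw [Set.ncard_union_eq hdisj] at hle
  have hsdiff := Set.ncard_sdiff_add_ncard_of_subset hMI
  omega

lemma WellIndumatched.exists_adj_of_exchange [Finite V] (hG : WellIndumatched G)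
    {p q a' b' : V} (hM : IsInducedMatching G M)
    (hpq : G.Adj p q) (hp : p ∉ dominatedSet G M) (hq : q ∉ dominatedSet G M)
    (ha : G.Adj a a') (haM : a ∉ dominatedSet G M) (haM' : a' ∉ dominatedSet G M)
    (hb : G.Adj b b') (hbM : b ∉ dominatedSet G (insert s(a, a') M))
    (hbM' : b' ∉ dominatedSet G (insert s(a, a') M)) :
    ∃ u ∈ dominatedSet G (insert s(b, b') (insert s(a, a') M)),
      u ∉ dominatedSet G (insert s(p, q) M) ∧ ∃ w, G.Adj u w ∧
        w ∉ dominatedSet G (insert s(p, q) M) := by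
  by_contra! hdom
  have hle := hG.ncard_le_of_dominated (hM.insert hpq hp hq)
    ((hM.insert ha haM haM').insert hb hbM hbM') hdom
  rw [ncard_insert_of_notMem_dominatedSet hp, ncard_insert_of_notMem_dominatedSet hbM,
    ncard_insert_of_notMem_dominatedSet haM] at hle
  omega

variable {G' : SimpleGraph V'}

lemma IsInducedMatching.map_iso (φ : G ≃g G') (hM : IsInducedMatching G M) :
    IsInducedMatching G' (Sym2.map φ '' M) := by
  constructor
  · rintro _ ⟨e, he, rfl⟩
    exact φ.toHom.map_mem_edgeSet (hM.1 he)
  · rintro _ ⟨e, he, rfl⟩ _ ⟨f, hf, rfl⟩ hef _ hφu _ hφv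
    obtain ⟨u, hu, rfl⟩ := Sym2.mem_map.1 hφu
    obtain ⟨v, hv, rfl⟩ := Sym2.mem_map.1 hφv
    simpa [φ.map_adj_iff] using hM.2 e he f hf (fun h ↦ hef (h ▸ rfl)) u hu v hv

lemma IsMaximalInducedMatching.map_iso (φ : G ≃g G') (hM : IsMaximalInducedMatching G M) :
    IsMaximalInducedMatching G' (Sym2.map φ '' M) := by
  have hcancel : ∀ e, Sym2.map φ (Sym2.map φ.symm e) = e := by simp [Sym2.map_map]
  have hcancel' : ∀ e, Sym2.map φ.symm (Sym2.map φ e) = e := by simp [Sym2.map_map]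
  refine ⟨hM.1.map_iso φ, fun N hN hMN ↦ ?_⟩
  have hpullback := hM.2 _ (hN.map_iso φ.symm) fun e he ↦
    ⟨Sym2.map φ e, hMN (Set.mem_image_of_mem _ he), hcancel' e⟩
  rw [← hpullback, Set.image_image]
  simp only [hcancel, Set.image_id']

lemma ncard_image_map_iso (φ : G ≃g G') (M : Set (Sym2 V)) :
    (Sym2.map φ '' M).ncard = M.ncard :=
  Set.ncard_image_of_injective _ (Sym2.map.injective φ.injective)

lemma WellIndumatched.of_iso (φ : G ≃g G') (hG : WellIndumatched G') : WellIndumatched G :=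
  fun M N hM hN ↦ by
    simpa only [ncard_image_map_iso] using hG _ _ (hM.map_iso φ) (hN.map_iso φ)

end InducedMatching

section Tails

/-- The vertices of a graph on `W` after a path `base s, mid s, tip s` of length `2` has been
attached at every `s ∈ S`. -/
inductive TailVertex {W : Type*} (S : Set W)
  | base (w : W)
  | mid (s : S)
  | tip (s : S)

open TailVertex

variable {W : Type*} {S : Set W} {Γ : SimpleGraph W}

instance [Finite W] : Finite (TailVertex S) :=
  Finite.of_injective
    (fun | base w => Sum.inl w | mid s => Sum.inr (Sum.inl s) | tip s => Sum.inr (Sum.inr s) :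
      TailVertex S → W ⊕ S ⊕ S)
    (by rintro (_ | _ | _) (_ | _ | _) h <;> simp_all)

/-- The graph obtained from `Γ` by attaching a path of length `2` at every vertex of `S`. -/
def withTails (Γ : SimpleGraph W) (S : Set W) : SimpleGraph (TailVertex S) where
  Adj
    | base u, base v => Γ.Adj u v
    | base u, mid s => u = s
    | mid s, base u => u = s
    | mid s, tip t => s = t
    | tip t, mid s => s = t
    | _, _ => False
  symm := ⟨by rintro (_ | _ | _) (_ | _ | _) h <;> first | exact h.symm | exact h⟩
  loopless := ⟨by rintro (_ | _ | _) h <;> first | exact h.ne rfl | exact h⟩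

namespace withTails

variable {u v w : W} {s t : S}

@[simp] lemma adj_base_base : (withTails Γ S).Adj (base u) (base v) ↔ Γ.Adj u v := .rfl
@[simp] lemma adj_base_mid : (withTails Γ S).Adj (base u) (mid s) ↔ u = s := .rfl
@[simp] lemma adj_mid_base : (withTails Γ S).Adj (mid s) (base u) ↔ u = s := .rfl
@[simp] lemma adj_mid_tip : (withTails Γ S).Adj (mid s) (tip t) ↔ s = t := .rfl
@[simp] lemma adj_tip_mid : (withTails Γ S).Adj (tip t) (mid s) ↔ s = t := .rfl
@[simp] lemma not_adj_base_tip : ¬ (withTails Γ S).Adj (base u) (tip s) := id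
@[simp] lemma not_adj_tip_base : ¬ (withTails Γ S).Adj (tip s) (base u) := id
@[simp] lemma not_adj_mid_mid : ¬ (withTails Γ S).Adj (mid s) (mid t) := id
@[simp] lemma not_adj_tip_tip : ¬ (withTails Γ S).Adj (tip s) (tip t) := id

/-- When `S` is empty, attaching paths at the vertices of `S` leaves `Γ` as it is. -/
def isoOfIsEmpty (Γ : SimpleGraph W) (S : Set W) [IsEmpty S] : withTails Γ S ≃g Γ where
  toFun | base w => w | mid s => isEmptyElim s | tip s => isEmptyElim s
  invFun := base
  left_inv := by rintro (w | s | s) <;> first | rfl | exact isEmptyElim s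
  right_inv _ := rfl
  map_rel_iff' := by
    rintro (u | s | s) (v | t | t) <;> first | rfl | exact isEmptyElim s | exact isEmptyElim t

variable {X : Set (Sym2 (TailVertex S))}

/-- The vertex of `W` carrying the attached path on which a vertex lies. -/
def root : TailVertex S → W
  | base w => w
  | mid s => s
  | tip s => s

@[simp] lemma root_base : root (base w : TailVertex S) = w := rfl
@[simp] lemma root_mid : root (mid s) = (s : W) := rfl
@[simp] lemma root_tip : root (tip s) = (s : W) := rfl

lemma notMem_dominatedSet_of_root (hX : X ⊆ (withTails Γ S).edgeSet) {x : TailVertex S}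
    (hx : base (root x) ∉ dominatedSet (withTails Γ S) X) :
    x ∉ dominatedSet (withTails Γ S) X := by
  rintro ⟨e, he, y, hy, hyx⟩
  have hend : ∀ z ∈ e, z ≠ base (root x) ∧ ¬ (withTails Γ S).Adj z (base (root x)) :=
    fun z hz ↦ not_or.1 fun h ↦ hx ⟨e, he, z, hz, h⟩
  obtain ⟨z, rfl⟩ := hy
  have hyz : (withTails Γ S).Adj y z := hX he
  have hy := hend y (Sym2.mem_mk_left y z)
  have hz := hend z (Sym2.mem_mk_right y z)
  rcases x with w | s | s <;> rcases y with u | t | t <;> rcases z with v | r | r <;> simp_all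

/-- The edges `{mid s, tip s}`, one in each attached path. -/
def tailMatching (S : Set W) : Set (Sym2 (TailVertex S)) :=
  Set.range fun s : S ↦ s(mid s, tip s)

lemma ncard_tailMatching : (tailMatching S).ncard = S.ncard := by
  refine (Set.ncard_range_of_injective fun s t h ↦ ?_)
  simpa using h

lemma isMaximalInducedMatching_tailMatching (hS : Γ.IsVertexCover S) :
    IsMaximalInducedMatching (withTails Γ S) (tailMatching S) := by
  have hdom (x : TailVertex S) : x ∈ dominatedSet (withTails Γ S) (tailMatching S) ↔
      ∀ w, x = base w → w ∈ S := by
    rcases x with w | s | s <;> simp [dominatedSet, tailMatching, eq_comm]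
  refine IsInducedMatching.isMaximalInducedMatching ⟨?_, ?_⟩ ?_
  · rintro _ ⟨s, rfl⟩
    simp
  · rintro _ ⟨s, rfl⟩ _ ⟨t, rfl⟩ hst
    have : s ≠ t := fun h ↦ hst (h ▸ rfl)
    simp [this, this.symm]
  · rintro (u | s | s) (v | t | t) huv
    case base.base => simpa [hdom] using hS huv
    all_goals simp_all

theorem isIndepSet_of_wellIndumatched [Finite W] (hG : WellIndumatched (withTails Γ S)) :
    Γ.IsIndepSet S := by
  intro u hu v hv huv hadj
  lift u to S using hu
  lift v to S using hv
  have hne : u ≠ v := ne_of_apply_ne _ huv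
  obtain ⟨x, hx, hx', y, hxy, hy⟩ := hG.exists_adj_of_exchange (M := ∅)
    (p := base u) (q := base v) (a := mid u) (a' := tip u) (b := mid v) (b' := tip v)
    isInducedMatching_empty (by simpa) (by simp) (by simp) (by simp) (by simp) (by simp) (by simp)
    (by simp [hne, hne.symm]) (by simp [hne])
  obtain ⟨s, rfl⟩ : ∃ s, x = tip s := by
    rcases x with w | s | s <;>
      grind [mem_dominatedSet_insert, notMem_dominatedSet_empty, adj_base_mid, adj_mid_base,
        not_adj_mid_mid, not_adj_tip_base, adj_tip_mid]
  obtain rfl | rfl : v = s ∨ u = s := by simpa using hx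
  all_goals rcases y with z | t | t <;> simp_all

theorem exists_adj_notMem_dominatedSet [Finite W] (hG : WellIndumatched (withTails Γ S))
    (hu : u ∈ S) (huv : Γ.Adj u v) (hvw : Γ.Adj v w) (hwu : w ≠ u) (hw : w ∉ S)
    (hX : IsInducedMatching (withTails Γ S) X)
    (huX : base u ∉ dominatedSet (withTails Γ S) X)
    (hvX : base v ∉ dominatedSet (withTails Γ S) X)
    (hwX : base w ∉ dominatedSet (withTails Γ S) X) :
    ∃ z, Γ.Adj w z ∧
      base z ∉ dominatedSet (withTails Γ S) (insert s(base u, base v) X) := by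
  lift u to S using hu
  obtain ⟨x, hx, hx', y, hxy, hy⟩ := hG.exists_adj_of_exchange hX
    (p := base u) (q := base v) (a := mid u) (a' := tip u) (b := base v) (b' := base w)
    huv huX hvX (by simp) (notMem_dominatedSet_of_root hX.1 huX)
    (notMem_dominatedSet_of_root hX.1 huX) hvw
    (by simpa [huv.ne'] using hvX) (by simpa [hwu] using hwX)
  obtain ⟨z, rfl, hwz⟩ | rfl : (∃ z, x = base z ∧ Γ.Adj w z) ∨ x = tip u := by
    rcases x with z | s | s <;>
      grind [mem_dominatedSet_insert, adj_base_base, adj_base_mid, adj_mid_base, not_adj_mid_mid,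
        adj_mid_tip, adj_tip_mid, not_adj_base_tip, not_adj_tip_base, not_adj_tip_tip]
  · exact ⟨z, hwz, hx'⟩
  · rcases y with z | t | t
    · exact absurd hxy not_adj_tip_base
    · obtain rfl := adj_tip_mid.1 hxy
      simp at hy
    · exact absurd hxy not_adj_tip_tip

end withTails
end Tails

section Cycle

open TailVertex withTails

/-- The cycle of length `g`, with vertices indexed by the ring `ZMod g`. -/
abbrev zmodCycle (g : ℕ) : SimpleGraph (ZMod g) :=
  circulantGraph {1}

variable {g : ℕ} {S : Set (ZMod g)} {i j : ZMod g}

lemma add_natCast_inj {k l : ℕ} (hk : k < l + g) (hl : l < k + g) :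
    i + k = i + l ↔ k = l := by
  rw [add_right_inj, ZMod.natCast_eq_natCast_iff]
  refine ⟨fun h ↦ h.eq_of_abs_lt ?_, fun h ↦ h ▸ rfl⟩
  rw [abs_lt]
  omega

lemma zmodCycle_adj_iff (hg : 1 < g) : (zmodCycle g).Adj i j ↔ j = i + 1 ∨ i = j + 1 := by
  have h1 : (1 : ZMod g) ≠ 0 := by
    have : Fact (1 < g) := ⟨hg⟩
    exact one_ne_zero
  simp only [circulantGraph_adj, Set.mem_singleton_iff]
  grind

lemma nonempty_zmodCycle_iso_cycleGraph (hg : g ≠ 0) :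
    Nonempty (zmodCycle g ≃g SimpleGraph.cycleGraph g) := by
  obtain ⟨n, rfl⟩ := Nat.exists_eq_succ_of_ne_zero hg
  rw [Nat.succ_eq_add_one, cycleGraph_eq_circulantGraph]
  exact ⟨Iso.refl⟩

/-- The cycle of length `g` with a path of length `2` attached at every vertex of `S`. -/
abbrev tailedCycle (S : Set (ZMod g)) : SimpleGraph (TailVertex S) :=
  withTails (zmodCycle g) S

theorem notMem_dominatedSet_of_gap (hg : 3 ≤ g) (hG : WellIndumatched (tailedCycle S))
    (hi : i ∈ S) (hi2 : i + 2 ∉ S) {X : Set (Sym2 (TailVertex S))}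
    (hX : IsInducedMatching (tailedCycle S) X)
    (hiX : base i ∉ dominatedSet (tailedCycle S) X)
    (hi1X : base (i + 1) ∉ dominatedSet (tailedCycle S) X)
    (hi2X : base (i + 2) ∉ dominatedSet (tailedCycle S) X) :
    base (i + 3) ∉ dominatedSet (tailedCycle S) X := by
  have : NeZero g := ⟨by omega⟩
  have hadj (a b : ZMod g) := @zmodCycle_adj_iff g a b (by omega)
  have hne : i + 2 ≠ i := by
    simpa using (add_natCast_inj (i := i) (k := 2) (l := 0) (by omega) (by omega)).not
  obtain ⟨z, hz, hzX⟩ := exists_adj_notMem_dominatedSet hG hi (v := i + 1) (w := i + 2)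
    ((hadj _ _).2 (.inl rfl)) ((hadj _ _).2 (by grind)) hne hi2 hX hiX hi1X hi2X
  obtain rfl : z = i + 3 := by
    simp only [hadj, mem_dominatedSet_insert, adj_base_base, TailVertex.base.injEq] at hz hzX
    grind
  exact mt mem_dominatedSet_insert_of_mem hzX

lemma eq_or_adj_add_natCast_iff {k l : ℕ} (hk : k + 2 ≤ l + g) (hl : l + 2 ≤ k + g) :
    (i + k = i + l ∨ (zmodCycle g).Adj (i + k) (i + l)) ↔ k ≤ l + 1 ∧ l ≤ k + 1 := by
  have hsucc (n : ℕ) : i + n + 1 = i + (n + 1 : ℕ) := by push_cast; ring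
  rw [zmodCycle_adj_iff (by omega), hsucc, hsucc, add_natCast_inj (by omega) (by omega),
    add_natCast_inj (by omega) (by omega), add_natCast_inj (by omega) (by omega)]
  omega

lemma exists_natCast_of_eq_or_adj (hg : 1 < g) {k : ℕ}
    (h : i + (k + 1 : ℕ) = j ∨ (zmodCycle g).Adj (i + (k + 1 : ℕ)) j) :
    ∃ l : ℕ, k ≤ l ∧ l ≤ k + 2 ∧ j = i + l := by
  rw [zmodCycle_adj_iff hg] at h
  obtain h | h | h := h
  exacts [⟨k + 1, by omega, by omega, h.symm⟩, ⟨k + 2, by omega, le_rfl, by grind⟩,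
    ⟨k, le_rfl, by omega, by grind⟩]

/-- The edge `{i + k, i + k + 1}` of the cycle in `tailedCycle S`. The offset `k` is a natural
number so that the distance between two such edges is a matter of arithmetic in `ℕ`. -/
abbrev arcEdge (S : Set (ZMod g)) (i : ZMod g) (k : ℕ) : Sym2 (TailVertex S) :=
  s(base (i + k), base (i + (k + 1 : ℕ)))

lemma tailedCycle_adj_succ (hg : 1 < g) (k : ℕ) :
    (tailedCycle S).Adj (base (i + k)) (base (i + (k + 1 : ℕ))) :=
  (zmodCycle_adj_iff hg).2 (.inl (by push_cast; ring))

lemma base_mem_dominatedSet_insert_iff {X : Set (Sym2 (TailVertex S))} {k l : ℕ}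
    (hk : k + 3 ≤ l + g) (hl : l + 2 ≤ k + g) :
    base (i + l) ∈ dominatedSet (tailedCycle S) (insert (arcEdge S i k) X) ↔
      (k ≤ l + 1 ∧ l ≤ k + 2) ∨ base (i + l) ∈ dominatedSet (tailedCycle S) X := by
  rw [mem_dominatedSet_insert, adj_base_base, adj_base_base, TailVertex.base.injEq,
    TailVertex.base.injEq, eq_or_adj_add_natCast_iff (by omega) hl,
    eq_or_adj_add_natCast_iff (by omega) (by omega), ← or_assoc]
  refine or_congr_left ?_
  omega

lemma base_mem_dominatedSet_singleton_iff {k l : ℕ} (hk : k + 3 ≤ l + g) (hl : l + 2 ≤ k + g) :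
    base (i + l) ∈ dominatedSet (tailedCycle S) {arcEdge S i k} ↔ k ≤ l + 1 ∧ l ≤ k + 2 := by
  rw [← insert_empty_eq, base_mem_dominatedSet_insert_iff hk hl]
  simp only [notMem_dominatedSet_empty, or_false]

lemma exists_natCast_of_mem_dominatedSet_insert (hg : 1 < g) {X : Set (Sym2 (TailVertex S))}
    {k : ℕ} (h : base j ∈ dominatedSet (tailedCycle S)
      (insert (arcEdge S i (k + 1)) X)) :
    (∃ l : ℕ, k ≤ l ∧ l ≤ k + 3 ∧ j = i + l) ∨ base j ∈ dominatedSet (tailedCycle S) X := by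
  simp only [mem_dominatedSet_insert, adj_base_base, TailVertex.base.injEq] at h
  obtain h | h | h := h
  · obtain ⟨l, hl, hl', hj⟩ := exists_natCast_of_eq_or_adj hg h
    exact .inl ⟨l, hl, by omega, hj⟩
  · obtain ⟨l, hl, hl', hj⟩ := exists_natCast_of_eq_or_adj hg h
    exact .inl ⟨l, by omega, by omega, hj⟩
  · exact .inr h

theorem add_two_mem (hg : 7 ≤ g) (hG : WellIndumatched (tailedCycle S)) (hi : i ∈ S) :
    i + 2 ∈ S := by
  by_contra hi2
  have hdom (k : ℕ) (hk : k ≤ 3) : base (i + k) ∈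
      dominatedSet (tailedCycle S) {arcEdge S i 4} ↔ k = 3 := by
    rw [base_mem_dominatedSet_singleton_iff (by omega) (by omega)]
    omega
  have hfree (k : ℕ) (hk : k ≤ 2) : base (i + k) ∉
      dominatedSet (tailedCycle S) {arcEdge S i 4} := by
    rw [hdom k (by omega)]
    omega
  have h3 : base (i + 3) ∈ dominatedSet (tailedCycle S) {arcEdge S i 4} := (hdom 3 le_rfl).2 rfl
  refine notMem_dominatedSet_of_gap (by omega) hG hi hi2
    (isInducedMatching_singleton (tailedCycle_adj_succ (by omega) 4)) ?_ ?_ (hfree 2 le_rfl) h3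
  · simpa only [Nat.cast_zero, add_zero] using hfree 0 (by omega)
  · simpa only [Nat.cast_one] using hfree 1 (by omega)

lemma eq_or_eq_of_mem_dominatedSet_exchange (hg : 6 ≤ g) {X : Set (Sym2 (TailVertex S))}
    (h2 : base (i + (2 : ℕ)) ∈ dominatedSet (tailedCycle S) X)
    (hj : base j ∈
      dominatedSet (tailedCycle S) (insert (arcEdge S i 6) (insert (arcEdge S i 3) X)))
    (hj' : base j ∉ dominatedSet (tailedCycle S) (insert (arcEdge S i 5) X)) :
    j = i + (3 : ℕ) ∨ j = i + (8 : ℕ) := by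
  have hjX := mt mem_dominatedSet_insert_of_mem hj'
  have hnear (k : ℕ) (hk : 2 ≤ k) (hk' : k ≤ 8) (hjk : j = i + k) : k = 3 ∨ k = 8 := by
    have hk2 : k ≠ 2 := by
      rintro rfl
      exact hjX (hjk ▸ h2)
    have hk47 : ¬ (4 ≤ k ∧ k ≤ 7) := fun h ↦ hj' <| hjk ▸
      (base_mem_dominatedSet_insert_iff (by omega) (by omega)).2 (.inl (by omega))
    omega
  obtain ⟨k, hk, hk', hjk⟩ : ∃ k : ℕ, 2 ≤ k ∧ k ≤ 8 ∧ j = i + k := by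
    obtain ⟨k, hk, hk', hjk⟩ | h :=
      exists_natCast_of_mem_dominatedSet_insert (k := 5) (by omega) hj
    · exact ⟨k, by omega, by omega, hjk⟩
    · obtain ⟨k, hk, hk', hjk⟩ :=
        (exists_natCast_of_mem_dominatedSet_insert (k := 2) (by omega) h).resolve_right hjX
      exact ⟨k, by omega, by omega, hjk⟩
  obtain rfl | rfl := hnear k hk hk' hjk
  exacts [.inl hjk, .inr hjk]

/- Exchanging the edge at offset `5` for those at offsets `3` and `6` changes the dominated set
near `i` by `3` and `8` only, so that some neighbour of one of these is still undominated. -/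
lemma notMem_dominatedSet_of_arc (hg : 8 ≤ g)
    (hG : WellIndumatched (tailedCycle (∅ : Set (ZMod g))))
    {X : Set (Sym2 (TailVertex (∅ : Set (ZMod g))))}
    (hX : IsInducedMatching (tailedCycle ∅) X)
    (hfree : ∀ k : ℕ, 3 ≤ k → k ≤ 7 → base (i + k) ∉ dominatedSet (tailedCycle ∅) X)
    (h2 : base (i + (2 : ℕ)) ∈ dominatedSet (tailedCycle ∅) X) :
    base (i + (8 : ℕ)) ∉ dominatedSet (tailedCycle ∅) X ∧
      base (i + (9 : ℕ)) ∉ dominatedSet (tailedCycle ∅) X := by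
  have : NeZero g := ⟨by omega⟩
  have hadj := tailedCycle_adj_succ (S := ∅) (i := i) (g := g) (by omega)
  have hfree' (l : ℕ) (hl : 6 ≤ l) (hl' : l ≤ 7) : base (i + l) ∉ dominatedSet (tailedCycle ∅)
      (insert (arcEdge ∅ i 3) X) := by
    rw [base_mem_dominatedSet_insert_iff (by omega) (by omega)]
    have := hfree l (by omega) hl'
    grind
  obtain ⟨x, hx, hx', y, hxy, hy⟩ := hG.exists_adj_of_exchange hX (hadj 5)
    (hfree 5 (by omega) (by omega)) (hfree 6 (by omega) (by omega)) (hadj 3)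
    (hfree 3 (by omega) (by omega)) (hfree 4 (by omega) (by omega)) (hadj 6)
    (hfree' 6 (by omega) (by omega)) (hfree' 7 (by omega) (by omega))
  have hdom (l : ℕ) (hl : 4 ≤ l) (hl' : l ≤ 7) : base (i + l) ∈ dominatedSet (tailedCycle ∅)
      (insert (arcEdge ∅ i 5) X) :=
    (base_mem_dominatedSet_insert_iff (by omega) (by omega)).2 (.inl (by omega))
  rcases x with u | ⟨_, ⟨⟩⟩ | ⟨_, ⟨⟩⟩
  rcases y with w | ⟨_, ⟨⟩⟩ | ⟨_, ⟨⟩⟩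
  obtain rfl | rfl := eq_or_eq_of_mem_dominatedSet_exchange (by omega) h2 hx hx'
  · obtain ⟨l, hl, hl', rfl⟩ := exists_natCast_of_eq_or_adj (k := 2) (by omega) (.inr hxy)
    obtain rfl | rfl | rfl : l = 2 ∨ l = 3 ∨ l = 4 := by omega
    exacts [absurd (mem_dominatedSet_insert_of_mem h2) hy, absurd rfl hxy.ne,
      absurd (hdom 4 (by omega) (by omega)) hy]
  · obtain ⟨l, hl, hl', rfl⟩ := exists_natCast_of_eq_or_adj (k := 7) (by omega) (.inr hxy)
    obtain rfl | rfl | rfl : l = 7 ∨ l = 8 ∨ l = 9 := by omega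
    exacts [absurd (hdom 7 (by omega) (by omega)) hy, absurd rfl hxy.ne,
      ⟨mt mem_dominatedSet_insert_of_mem hx', mt mem_dominatedSet_insert_of_mem hy⟩]

theorem eq_eleven_of_wellIndumatched (hg : 9 ≤ g)
    (hG : WellIndumatched (tailedCycle (∅ : Set (ZMod g)))) : g = 11 := by
  by_contra hg11
  have hadj := tailedCycle_adj_succ (S := ∅) (i := (0 : ZMod g)) (by omega)
  have hX : IsInducedMatching (tailedCycle ∅) {arcEdge ∅ (0 : ZMod g) 0} :=
    isInducedMatching_singleton (hadj 0)
  have hdom (k : ℕ) (hk : k + 2 ≤ g) : base (S := ∅) ((0 : ZMod g) + k) ∈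
      dominatedSet (tailedCycle ∅) {arcEdge ∅ (0 : ZMod g) 0} ↔ k ≤ 2 := by
    rw [base_mem_dominatedSet_singleton_iff (by omega) (by omega)]
    omega
  by_cases hg12 : 12 ≤ g
  · have hdom' (k : ℕ) (hk : k ≤ 8) : base (S := ∅) ((0 : ZMod g) + k) ∈
        dominatedSet (tailedCycle ∅)
          (insert (arcEdge ∅ (0 : ZMod g) 9) {arcEdge ∅ (0 : ZMod g) 0}) ↔ k = 8 ∨ k ≤ 2 := by
      rw [base_mem_dominatedSet_insert_iff (by omega) (by omega), hdom k (by omega)]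
      omega
    refine (notMem_dominatedSet_of_arc (by omega) hG (hX.insert (hadj 9) ?_ ?_) ?_ ?_).1
      ((hdom' 8 le_rfl).2 (.inl rfl))
    · rw [hdom 9 (by omega)]
      omega
    · rw [hdom 10 (by omega)]
      omega
    · intro k hk hk'
      rw [hdom' k (by omega)]
      omega
    · exact (hdom' 2 (by omega)).2 (.inr le_rfl)
  · have hlast : base (S := ∅) ((0 : ZMod g) + (g - 1 : ℕ)) ∈
        dominatedSet (tailedCycle ∅) {arcEdge ∅ (0 : ZMod g) 0} := by
      refine mem_dominatedSet_singleton.2 (.inl (.inr ((zmodCycle_adj_iff (by omega)).2 (.inr ?_))))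
      rw [Nat.cast_sub (by omega)]
      simp
    have := notMem_dominatedSet_of_arc (by omega) hG hX
      (fun k hk hk' ↦ by rw [hdom k (by omega)]; omega) ((hdom 2 (by omega)).2 le_rfl)
    obtain rfl | rfl : g = 9 ∨ g = 10 := by omega
    exacts [this.1 hlast, this.2 hlast]

theorem nonempty_of_wellIndumatched (hg : 9 ≤ g)
    (h11 : IsEmpty (tailedCycle S ≃g SimpleGraph.cycleGraph 11))
    (hG : WellIndumatched (tailedCycle S)) : S.Nonempty := by
  by_contra hS
  obtain rfl := Set.not_nonempty_iff_eq_empty.1 hS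
  obtain rfl := eq_eleven_of_wellIndumatched hg hG
  obtain ⟨ψ⟩ := nonempty_zmodCycle_iso_cycleGraph (g := 11) (by omega)
  exact h11.false ((isoOfIsEmpty _ _).trans ψ)

theorem mem_iff_add_one_notMem (hg : 7 ≤ g) (hS : S.Nonempty)
    (hG : WellIndumatched (tailedCycle S)) (i : ZMod g) : i ∈ S ↔ i + 1 ∉ S := by
  have : NeZero g := ⟨by omega⟩
  have hadj : (zmodCycle g).Adj i (i + 1) := (zmodCycle_adj_iff (by omega)).2 (.inl rfl)
  refine ⟨fun hi hi1 ↦ isIndepSet_of_wellIndumatched hG hi hi1 hadj.ne hadj, fun hi1 ↦ ?_⟩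
  obtain ⟨s, hs⟩ := hS
  have heven (n : ℕ) : s + 2 * n ∈ S := by
    induction n with
    | zero => simpa using hs
    | succ n ih => convert add_two_mem hg hG ih using 1; push_cast; ring
  have hi : i = s + (i - s).val := by simp
  obtain ⟨n, hn | hn⟩ := Nat.even_or_odd' (i - s).val
  · rw [hi, hn]
    exact_mod_cast heven n
  · refine absurd ?_ hi1
    rw [hi, hn]
    convert heven (n + 1) using 1
    push_cast
    ring

lemma ncard_add_ncard_of_mem_iff [NeZero g] (hS : ∀ i, i ∈ S ↔ i + 1 ∉ S) :
    S.ncard + S.ncard = g := by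
  have hcompl : (· + 1) '' S = Sᶜ := by
    ext i
    rw [← sub_add_cancel i 1, (add_left_injective 1).mem_set_image, hS, Set.mem_compl_iff]
  have h := Set.ncard_add_ncard_compl S
  rwa [← hcompl, Set.ncard_image_of_injective _ (add_left_injective 1), Nat.card_zmod] at h

lemma isVertexCover_of_mem_iff (hg : 1 < g) (hS : ∀ i, i ∈ S ↔ i + 1 ∉ S) :
    (zmodCycle g).IsVertexCover S := by
  intro i j hij
  obtain rfl | rfl := (zmodCycle_adj_iff hg).1 hij
  exacts [or_iff_not_imp_right.2 (hS i).2, or_iff_not_imp_left.2 (hS j).2]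

end Cycle

section TailDecomposition

open TailVertex withTails

variable {V W : Type*} {G H : SimpleGraph V} {S : Set W} {c : W → V}
  {x y : S → V}

/-- The map out of the vertices of `withTails Γ S` with given values `c` on the vertices of `Γ` and
`x`, `y` on the middle vertices and tips of the attached paths. -/
def tailMap (c : W → V) (x y : S → V) : TailVertex S → V
  | base w => c w
  | mid s => x s
  | tip s => y s

/-- The points `c w` lie in distinct components of `H`, and `c s, x s, y s` is an induced path of
`H` for every `s ∈ S`. -/
structure IsTailFrame (H : SimpleGraph V) (c : W → V) (x y : S → V) : Prop where
  eq_of_reachable : ∀ u w, H.Reachable (c u) (c w) → u = w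
  adj_mid : ∀ s : S, H.Adj (c s) (x s)
  adj_tip : ∀ s, H.Adj (x s) (y s)
  ne_tip : ∀ s : S, c s ≠ y s
  not_adj_tip : ∀ s : S, ¬ H.Adj (c s) (y s)

namespace IsTailFrame

variable {a b : TailVertex S}

lemma root_eq_of_reachable (F : IsTailFrame H c x y)
    (hab : H.Reachable (tailMap c x y a) (tailMap c x y b)) :
    root a = root b := by
  have hroot (a : TailVertex S) : H.Reachable (c (root a)) (tailMap c x y a) := by
    rcases a with w | s | s
    exacts [.rfl, (F.adj_mid s).reachable, (F.adj_mid s).reachable.trans (F.adj_tip s).reachable]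
  exact F.eq_of_reachable _ _ ((hroot a).trans (hab.trans (hroot b).symm))

lemma injective (F : IsTailFrame H c x y) : Function.Injective (tailMap c x y) := by
  intro a b hab
  have hroot := F.root_eq_of_reachable (a := a) (b := b) (by rw [hab])
  rcases a with u | s | s <;> rcases b with w | t | t <;>
    simp only [root_base, root_mid, root_tip, Subtype.val_inj] at hroot <;> subst hroot
  case base.base | mid.mid | tip.tip => rfl
  case base.mid => exact absurd hab (F.adj_mid t).ne
  case base.tip => exact absurd hab (F.ne_tip t)
  case mid.base => exact absurd hab.symm (F.adj_mid s).ne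
  case mid.tip => exact absurd hab (F.adj_tip _).ne
  case tip.base => exact absurd hab.symm (F.ne_tip s)
  case tip.mid => exact absurd hab.symm (F.adj_tip _).ne

lemma adj_and_root_eq (F : IsTailFrame H c x y)
    (hout : ∀ a b, G.Adj a b → a ∉ Set.range c → H.Adj a b)
    (ha : ∀ w, a ≠ base w) (hab : G.Adj (tailMap c x y a) (tailMap c x y b)) :
    H.Adj (tailMap c x y a) (tailMap c x y b) ∧ root a = root b := by
  have hH : H.Adj (tailMap c x y a) (tailMap c x y b) :=
    hout _ _ hab fun ⟨w, hw⟩ ↦ ha w (F.injective hw.symm)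
  exact ⟨hH, F.root_eq_of_reachable hH.reachable⟩

lemma adj_iff (F : IsTailFrame H c x y) (hHG : H ≤ G)
    (hout : ∀ a b, G.Adj a b → a ∉ Set.range c → H.Adj a b) :
    G.Adj (tailMap c x y a) (tailMap c x y b) ↔ (withTails (G.comap c) S).Adj a b := by
  have hmid {s : S} {b : TailVertex S} (hab : G.Adj (x s) (tailMap c x y b)) :
      (withTails (G.comap c) S).Adj (mid s) b := by
    obtain ⟨hH, hroot⟩ := F.adj_and_root_eq hout (a := mid s) (by simp) hab
    rcases b with u | t | t
    · exact hroot.symm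
    · exact absurd (Subtype.ext hroot) (ne_of_apply_ne x hH.ne)
    · exact Subtype.ext hroot
  have htip {s : S} {b : TailVertex S} (hab : G.Adj (y s) (tailMap c x y b)) :
      (withTails (G.comap c) S).Adj (tip s) b := by
    obtain ⟨hH, hroot⟩ := F.adj_and_root_eq hout (a := tip s) (by simp) hab
    rcases b with u | t | t
    · obtain rfl : s = u := hroot
      exact absurd hH.symm (F.not_adj_tip s)
    · exact Subtype.ext hroot.symm
    · exact absurd (Subtype.ext hroot) (ne_of_apply_ne y hH.ne)
  refine ⟨fun hab ↦ ?_, fun hab ↦ ?_⟩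
  · rcases a with u | s | s
    · rcases b with w | t | t
      exacts [hab, (hmid hab.symm).symm, (htip hab.symm).symm]
    exacts [hmid hab, htip hab]
  · rcases a with u | s | s <;> rcases b with w | t | t
    case base.base => exact hab
    case base.mid => obtain rfl : u = t := hab; exact hHG (F.adj_mid t)
    case mid.base => obtain rfl : w = s := hab; exact (hHG (F.adj_mid s)).symm
    case mid.tip => obtain rfl : s = t := hab; exact hHG (F.adj_tip s)
    case tip.mid => obtain rfl : t = s := hab; exact (hHG (F.adj_tip t)).symm
    all_goals exact hab.elim

end IsTailFrame

theorem nonempty_withTails_iso (hHG : H ≤ G)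
    (hout : ∀ a b, G.Adj a b → a ∉ Set.range c → H.Adj a b)
    (hsep : ∀ u w, H.Reachable (c u) (c w) → u = w) (hcov : ∀ a, ∃ w, H.Reachable (c w) a)
    (htypes : ∀ w, TypeI H (c w) ∨ TypeII H (c w)) :
    Nonempty (withTails (G.comap c) {w | TypeII H (c w)} ≃g G) := by
  choose x y _ _ hcy hsupp hadj_mid hadj_tip hnot_adj using
    fun s : {w | TypeII H (c w)} ↦ s.2
  have F : IsTailFrame H c x y := ⟨hsep, hadj_mid, hadj_tip, hcy, hnot_adj⟩
  have hsurj : Function.Surjective (tailMap c x y) := by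
    intro a
    obtain ⟨w, hw⟩ := hcov a
    have ha : a ∈ (H.connectedComponentMk (c w)).supp := ConnectedComponent.sound hw.symm
    obtain h | h := htypes w
    · exact ⟨base w, (Set.mem_singleton_iff.1 (h ▸ ha)).symm⟩
    · lift w to {w | TypeII H (c w)} using h
      rw [hsupp] at ha
      obtain rfl | rfl | rfl := ha
      exacts [⟨base w, rfl⟩, ⟨mid w, rfl⟩, ⟨tip w, rfl⟩]
  exact ⟨⟨.ofBijective _ ⟨F.injective, hsurj⟩, F.adj_iff hHG hout⟩⟩

end TailDecomposition

section Unicyclic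

open TailVertex withTails

variable {V : Type*} {G : SimpleGraph V} {v : V} {C : G.Walk v v} {u w : V} {i j : ZMod C.length}
  {n : ℕ}

lemma reachable_deleteEdges_singleton_of_mem_support {e : Sym2 V} (he : e ∉ C.edges)
    (hu : u ∈ C.support) (hw : w ∈ C.support) : (G.deleteEdges {e}).Reachable u w := by
  classical
  have hv (a : V) (ha : a ∈ C.support) : (G.deleteEdges {e}).Reachable v a :=
    ⟨(C.takeUntil a ha).toDeleteEdges {e} fun f hf hfe ↦
      he (Set.mem_singleton_iff.1 hfe ▸ C.edges_takeUntil_subset_edges ha hf)⟩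
  exact (hv u hu).symm.trans (hv w hw)

/- The first edge of a path leaving `u` off the cycle is a bridge, yet its far end would return
to `u` along the rest of the path and the cycle. -/
theorem eq_of_reachable_deleteEdges
    (hcycle : ∀ (a : V) (D : G.Walk a a), D.IsCycle → ∀ e ∈ D.edges, e ∈ C.edges)
    (hu : u ∈ C.support) (hw : w ∈ C.support)
    (huw : (G.deleteEdges {e | e ∈ C.edges}).Reachable u w) : u = w := by
  obtain ⟨p, hp⟩ := huw.exists_isPath
  cases p with
  | nil => rfl
  | @cons _ x _ hux q =>
    obtain ⟨-, huq⟩ := (Walk.cons_isPath_iff hux q).1 hp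
    obtain ⟨hadj, hmem⟩ := deleteEdges_adj.1 hux
    have hbridge : ¬ (G.deleteEdges {s(u, x)}).Reachable u x :=
      isBridge_iff.1 ((isBridge_iff_forall_cycle_notMem hadj).2
        fun a D hD h ↦ hmem (hcycle a D hD _ h))
    have hxw : (G.deleteEdges {s(u, x)}).Reachable x w := by
      refine ⟨(q.mapLe (deleteEdges_le _)).toDeleteEdges {s(u, x)} fun f hf hfe ↦ huq ?_⟩
      rw [Walk.edges_mapLe_eq_edges, Set.mem_singleton_iff.1 hfe] at hf
      exact q.fst_mem_support_of_mem_edges hf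
    exact absurd ((reachable_deleteEdges_singleton_of_mem_support hmem hu hw).trans hxw.symm)
      hbridge

lemma exists_mem_support_reachable_deleteEdges (hw : w ∈ C.support) (p : G.Walk u w) :
    ∃ z ∈ C.support, (G.deleteEdges {e | e ∈ C.edges}).Reachable z u := by
  induction p with
  | nil => exact ⟨_, hw, .rfl⟩
  | @cons a b _ hab _ ih =>
    by_cases he : s(a, b) ∈ C.edges
    · exact ⟨a, C.fst_mem_support_of_mem_edges he, .rfl⟩
    · obtain ⟨z, hz, hzb⟩ := ih hw
      exact ⟨z, hz, hzb.trans (Adj.reachable (deleteEdges_adj.2 ⟨hab, he⟩)).symm⟩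

/-- The vertices of a closed walk, indexed by the ring `ZMod C.length`. -/
def cyclicVertex (C : G.Walk v v) (i : ZMod C.length) : V :=
  C.getVert i.val

lemma cyclicVertex_mem_support : cyclicVertex C i ∈ C.support :=
  C.getVert_mem_support _

lemma cyclicVertex_natCast (hn : n ≤ C.length) : cyclicVertex C n = C.getVert n := by
  obtain hn | rfl := hn.lt_or_eq
  · rw [cyclicVertex, ZMod.val_natCast_of_lt hn]
  · rw [cyclicVertex, ZMod.natCast_self, ZMod.val_zero, C.getVert_zero, C.getVert_length]

lemma range_cyclicVertex : Set.range (cyclicVertex C) = {w | w ∈ C.support} := by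
  ext w
  refine ⟨fun ⟨i, hi⟩ ↦ hi ▸ cyclicVertex_mem_support, fun hw ↦ ?_⟩
  obtain ⟨n, rfl, hn⟩ := Walk.mem_support_iff_exists_getVert.1 hw
  exact ⟨n, cyclicVertex_natCast hn⟩

lemma injective_cyclicVertex (hC : C.IsCycle) : Function.Injective (cyclicVertex C) := by
  have : NeZero C.length := ⟨by have := hC.three_le_length; omega⟩
  intro i j hij
  exact ZMod.val_injective _ (hC.getVert_injOn' (Nat.le_sub_one_of_lt (ZMod.val_lt i))
    (Nat.le_sub_one_of_lt (ZMod.val_lt j)) hij)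

lemma mem_edges_iff_cyclicVertex [NeZero C.length] {e : Sym2 V} :
    e ∈ C.edges ↔ ∃ i, e = s(cyclicVertex C i, cyclicVertex C (i + 1)) := by
  have hedge (n : ℕ) (hn : n < C.length) :
      s(C.getVert n, C.getVert (n + 1)) = s(cyclicVertex C n, cyclicVertex C (n + 1)) := by
    rw [← cyclicVertex_natCast hn.le, ← cyclicVertex_natCast hn, Nat.cast_succ]
  rw [List.mem_iff_getElem]
  constructor
  · rintro ⟨n, hn, rfl⟩
    rw [Walk.getElem_edges]
    exact ⟨n, hedge n (by simpa using hn)⟩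
  · rintro ⟨i, rfl⟩
    refine ⟨i.val, by simpa using ZMod.val_lt i, ?_⟩
    rw [Walk.getElem_edges, hedge _ (ZMod.val_lt i), ZMod.natCast_zmod_val]

lemma mem_edges_cyclicVertex_iff (hC : C.IsCycle) :
    s(cyclicVertex C i, cyclicVertex C j) ∈ C.edges ↔ (zmodCycle C.length).Adj i j := by
  have hlen := hC.three_le_length
  have : NeZero C.length := ⟨by omega⟩
  rw [mem_edges_iff_cyclicVertex, zmodCycle_adj_iff (by omega)]
  simp only [Sym2.eq_iff, (injective_cyclicVertex hC).eq_iff]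
  grind

theorem comap_cyclicVertex (hC : C.IsCycle)
    (hcycle : ∀ (a : V) (D : G.Walk a a), D.IsCycle → ∀ e ∈ D.edges, e ∈ C.edges) :
    G.comap (cyclicVertex C) = zmodCycle C.length := by
  ext i j
  rw [comap_adj, ← mem_edges_cyclicVertex_iff hC]
  refine ⟨fun hij ↦ ?_, C.adj_of_mem_edges⟩
  by_contra hmem
  exact hij.ne (eq_of_reachable_deleteEdges hcycle cyclicVertex_mem_support
    cyclicVertex_mem_support (Adj.reachable (deleteEdges_adj.2 ⟨hij, hmem⟩)))

theorem nonempty_tailedCycle_iso (hconn : G.Connected) (hC : C.IsCycle)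
    (hcycle : ∀ (a : V) (D : G.Walk a a), D.IsCycle → ∀ e ∈ D.edges, e ∈ C.edges)
    (htypes : ∀ w ∈ C.support, TypeI (G.deleteEdges {e | e ∈ C.edges}) w ∨
      TypeII (G.deleteEdges {e | e ∈ C.edges}) w) :
    Nonempty (tailedCycle {i | TypeII (G.deleteEdges {e | e ∈ C.edges}) (cyclicVertex C i)} ≃g
      G) := by
  rw [tailedCycle, ← comap_cyclicVertex hC hcycle]
  refine nonempty_withTails_iso (deleteEdges_le _) (fun a b hab ha ↦ ?_) (fun i j hij ↦ ?_)
    (fun a ↦ ?_) fun i ↦ htypes _ cyclicVertex_mem_support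
  · rw [range_cyclicVertex] at ha
    exact deleteEdges_adj.2 ⟨hab, fun h ↦ ha (C.fst_mem_support_of_mem_edges h)⟩
  · exact injective_cyclicVertex hC (eq_of_reachable_deleteEdges hcycle cyclicVertex_mem_support
      cyclicVertex_mem_support hij)
  · obtain ⟨p⟩ := hconn.preconnected a v
    obtain ⟨w, hw, hwa⟩ := exists_mem_support_reachable_deleteEdges C.start_mem_support p
    obtain ⟨i, rfl⟩ : w ∈ Set.range (cyclicVertex C) := range_cyclicVertex ▸ hw
    exact ⟨i, hwa⟩

end Unicyclic

theorem stmt_14_general {V : Type*} (G : SimpleGraph V) (hWIM : WellIndumatched G)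
    (hconn : G.Connected) (hnot11 : IsEmpty (G ≃g SimpleGraph.cycleGraph 11))
    (v : V) (C : G.Walk v v) (hC : C.IsCycle) (hlen : 9 ≤ C.length)
    (hcycle : ∀ (w : V) (D : G.Walk w w), D.IsCycle → ∀ e ∈ D.edges, e ∈ C.edges)
    (htypes : ∀ w ∈ C.support,
      TypeI (G.deleteEdges {e | e ∈ C.edges}) w ∨
        TypeII (G.deleteEdges {e | e ∈ C.edges}) w) :
    (∀ i < C.length,
      (TypeI (G.deleteEdges {e | e ∈ C.edges}) (C.getVert i) ∧
        TypeII (G.deleteEdges {e | e ∈ C.edges}) (C.getVert (i + 1))) ∨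
      (TypeII (G.deleteEdges {e | e ∈ C.edges}) (C.getVert i) ∧
        TypeI (G.deleteEdges {e | e ∈ C.edges}) (C.getVert (i + 1)))) ∧
    Even C.length ∧
    ∀ M : Set (Sym2 V), IsMaximalInducedMatching G M → M.ncard = C.length / 2 := by
  have : NeZero C.length := ⟨by omega⟩
  obtain ⟨φ⟩ := nonempty_tailedCycle_iso hconn hC hcycle htypes
  have hG := hWIM.of_iso φ
  have hS := nonempty_of_wellIndumatched hlen ⟨fun ψ ↦ hnot11.false (φ.symm.trans ψ)⟩ hG
  have halt := mem_iff_add_one_notMem (by omega) hS hG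
  have hcard := ncard_add_ncard_of_mem_iff halt
  refine ⟨fun i hi ↦ ?_, ⟨_, hcard.symm⟩, fun M hM ↦ ?_⟩
  · have hii := halt i
    rw [← Nat.cast_succ, Set.mem_ofPred_eq, Set.mem_ofPred_eq, cyclicVertex_natCast hi.le,
      cyclicVertex_natCast hi] at hii
    have hi₀ := htypes _ (C.getVert_mem_support i)
    have hi₁ := htypes _ (C.getVert_mem_support (i + 1))
    tauto
  · have htail := withTails.isMaximalInducedMatching_tailMatching
      (isVertexCover_of_mem_iff (by omega) halt)
    rw [hWIM _ _ hM (htail.map_iso φ), ncard_image_map_iso, withTails.ncard_tailMatching]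
    omega

/-- Let `G ≠ C₁₁` be a reduced well-indumatched unicyclic graph of girth `g ≥ 10` with
unique cycle `C = v₁ ⋯ v_g v₁`, all of whose rooted trees `T_{v_i}` are of Type (i) or
Type (ii). Then the trees `T_{v_i}` and `T_{v_{i+1}}` are alternately of Type (i) and
Type (ii); in particular `g` is even and every maximal induced matching of `G` has size
`g / 2`. -/
theorem stmt_14 {V : Type*} [Fintype V] (G : SimpleGraph V) (g : ℕ) (hg : 10 ≤ g)
    (hred : Reduced G) (hWIM : WellIndumatched G) (hconn : G.Connected)
    (hgirth : G.girth = g) (hnot11 : IsEmpty (G ≃g SimpleGraph.cycleGraph 11))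
    (v : V) (C : G.Walk v v) (hC : C.IsCycle) (hlen : C.length = g)
    (huniq : ∀ (w : V) (D : G.Walk w w), D.IsCycle → ∀ e, e ∈ D.edges ↔ e ∈ C.edges)
    (htypes : ∀ w ∈ C.support,
      TypeI (G.deleteEdges {e | e ∈ C.edges}) w ∨
        TypeII (G.deleteEdges {e | e ∈ C.edges}) w) :
    (∀ i < g,
      (TypeI (G.deleteEdges {e | e ∈ C.edges}) (C.getVert i) ∧
        TypeII (G.deleteEdges {e | e ∈ C.edges}) (C.getVert (i + 1))) ∨
      (TypeII (G.deleteEdges {e | e ∈ C.edges}) (C.getVert i) ∧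
        TypeI (G.deleteEdges {e | e ∈ C.edges}) (C.getVert (i + 1)))) ∧
    Even g ∧
    ∀ M : Set (Sym2 V), IsMaximalInducedMatching G M → M.ncard = g / 2 := by
  subst hlen
  exact stmt_14_general G hWIM hconn hnot11 v C hC (by omega)
    (fun w D hD e he ↦ (huniq w D hD e).1 he) htypes
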